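/- Let n ≥ 2, 1 ≤ s ≤ n, let a₁,…,a_{s−1} be nonzero real numbers and b ∈ ℝ, and let L ⊆ ℝⁿ be the hyperplane parameterized by f(x₁,…,x_{n−1}) = (x₁,…,x_{n−1}, a₁x₁+⋯+a_{s−1}x_{s−1}+b). Then ω×(L) = max{n, (n/s)·σ((a₁,…,a_{s−1},b))}, where σ is applied to the vector (a₁,…,a_{s−1},b) ∈ ℝˢ. -/

import Mathlib

open Filter MeasureTheory Metric Set BigOperators

/-- Π×(q) = ∏_{i : qᵢ ≠ 0} |qᵢ| (empty product = 1). -/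
noncomputable def prodTimes {n : ℕ} (q : Fin n → ℤ) : ℝ :=
  ∏ i, if q i = 0 then 1 else |(q i : ℝ)|

/-- Multiplicative Diophantine exponent ω×(y): the sup (in the extended reals) of all
v ∈ ℝ such that there are infinitely many q ∈ ℤⁿ with |q·y + p| < Π×(q)^{-v/n}
for some p ∈ ℤ. -/
noncomputable def omegaT {n : ℕ} (y : Fin n → ℝ) : EReal :=
  sSup {w : EReal | ∃ v : ℝ, w = (v : EReal) ∧
    {q : Fin n → ℤ | ∃ p : ℤ, |(∑ i, (q i : ℝ) * y i) + (p : ℝ)| <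
      (prodTimes q) ^ (-(v / (n : ℝ)))}.Infinite}

/-- ω×(μ) for a measure: sup{v : μ{y : ω×(y) > v} > 0}. -/
noncomputable def omegaTMeas {n : ℕ} (μ : Measure (Fin n → ℝ)) : EReal :=
  sSup {w : EReal | ∃ v : ℝ, w = (v : EReal) ∧ 0 < μ {y | (v : EReal) < omegaT y}}

/-- σ(z) for a vector z ∈ ℝᵐ: sup of v such that for infinitely many q ∈ ℤ one has
max_i |q·zᵢ + pᵢ| < |q|^{-v} for some p ∈ ℤᵐ. -/
noncomputable def sigmaV {m : ℕ} (z : Fin m → ℝ) : EReal :=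
  sSup {w : EReal | ∃ v : ℝ, w = (v : EReal) ∧
    {q : ℤ | ∃ p : Fin m → ℤ, ∀ i, |(q : ℝ) * z i + (p i : ℝ)| < |(q : ℝ)| ^ (-v)}.Infinite}


lemma prodTimes_factor_ge_one (k : ℤ) : (1 : ℝ) ≤ if k = 0 then 1 else |(k : ℝ)| := by
  split_ifs with h
  · exact le_rfl
  · exact_mod_cast Int.one_le_abs h

lemma one_le_prodTimes {n : ℕ} (q : Fin n → ℤ) : 1 ≤ prodTimes q :=
  Finset.one_le_prod (fun i _ => prodTimes_factor_ge_one (q i))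

lemma prodTimes_single {n : ℕ} (i : Fin n) {k : ℤ} (hk : k ≠ 0) :
    prodTimes (Pi.single i k) = |(k : ℝ)| := by
  unfold prodTimes
  rw [Finset.prod_eq_single i]
  · simp [hk]
  · intro j _ hj
    simp [hj]
  · simp

lemma summable_pi_prod {f : ℤ → ℝ} (hf : Summable f) (hf0 : 0 ≤ f) (n : ℕ) :
    Summable (fun q : Fin n → ℤ => ∏ i, f (q i)) := by
  induction n with
  | zero => exact Summable.of_finite
  | succ n ih =>
    rw [← (Fin.consEquiv (fun _ => ℤ)).summable_iff]
    have := hf.mul_of_nonneg ih hf0 (fun q => Finset.prod_nonneg fun i _ => hf0 _)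
    refine this.congr fun x => ?_
    simp [Fin.prod_univ_succ, Fin.consEquiv]

lemma summable_prodTimes_rpow (n : ℕ) {u : ℝ} (hu : 1 < u) :
    Summable (fun q : Fin n → ℤ => prodTimes q ^ (-u)) := by
  have h1 : Summable (fun k : ℤ => (if k = 0 then (1 : ℝ) else |(k : ℝ)|) ^ (-u)) := by
    refine (summable_congr_cofinite ?_).1 (Real.summable_abs_int_rpow hu)
    filter_upwards [(Set.finite_singleton (0 : ℤ)).compl_mem_cofinite] with k hk
    have : k ≠ 0 := by simpa using hk
    simp [this]
  refine (summable_pi_prod h1 (fun k => ?_) n).congr fun q => ?_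
  · exact Real.rpow_nonneg (zero_le_one.trans (prodTimes_factor_ge_one k)) _
  · rw [prodTimes, ← Real.finsetProd_rpow]
    exact fun i _ => zero_le_one.trans (prodTimes_factor_ge_one _)

/-- If only finitely many integers approximate `z` to order `w`, then, passing to multiples, no
nonzero integer approximates `z` better than a constant times that order. -/
lemma exists_badly_approximable_const {m : ℕ} (z : Fin m → ℝ) (w : ℝ)
    (hfin : {q : ℤ | ∃ p : Fin m → ℤ, ∀ i,
      |(q : ℝ) * z i + (p i : ℝ)| < |(q : ℝ)| ^ (-w)}.Finite) :
    ∃ c : ℝ, 0 < c ∧ ∀ Q : ℤ, Q ≠ 0 → ∀ P : Fin m → ℤ,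
      ∃ i, c * |(Q : ℝ)| ^ (-w) ≤ |(Q : ℝ) * z i + (P i : ℝ)| := by
  obtain ⟨B, hB⟩ := hfin.bddAbove
  set M : ℤ := max B 0 + 1 with hM
  have hM0 : 0 < M := by positivity
  have hMR : (0 : ℝ) < M := by exact_mod_cast hM0
  refine ⟨(M : ℝ) ^ (-w) / M, by positivity, fun Q hQ P => ?_⟩
  by_contra! hcon
  have key : ∀ e : ℤ, |e| = 1 → M * (e * Q) ≤ B := by
    intro e he
    have heR : |(e : ℝ)| = 1 := by exact_mod_cast he
    refine hB ⟨fun i => M * (e * P i), fun i => ?_⟩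
    have h1 : ((M * (e * Q) : ℤ) : ℝ) * z i + ((M * (e * P i) : ℤ) : ℝ)
        = M * (e * (Q * z i + P i)) := by push_cast; ring
    have h2 : |((M * (e * Q) : ℤ) : ℝ)| = M * |(Q : ℝ)| := by
      push_cast; rw [abs_mul, abs_mul, heR, abs_of_pos hMR, one_mul]
    rw [h1, h2, abs_mul, abs_mul, heR, abs_of_pos hMR, one_mul,
      Real.mul_rpow hMR.le (abs_nonneg _)]
    calc (M : ℝ) * |Q * z i + P i| < M * ((M : ℝ) ^ (-w) / M * |(Q : ℝ)| ^ (-w)) := by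
          gcongr; exact hcon i
      _ = _ := by field_simp
  have h1 := key 1 (by simp)
  have h2 := key (-1) (by simp)
  have h3 : M * |Q| ≤ B := by
    rcases abs_cases Q with ⟨h, _⟩ | ⟨h, _⟩ <;> rw [h] <;> linarith
  have h4 : 1 ≤ |Q| := Int.one_le_abs hQ
  have h5 : M ≤ M * |Q| := by nlinarith
  have h6 : B ≤ max B 0 := le_max_left _ _
  omega

lemma finite_of_sigmaV_lt {m : ℕ} {z : Fin m → ℝ} {w : ℝ} (h : sigmaV z < w) :
    {q : ℤ | ∃ p : Fin m → ℤ, ∀ i,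
      |(q : ℝ) * z i + (p i : ℝ)| < |(q : ℝ)| ^ (-w)}.Finite := by
  by_contra hcon
  exact absurd h (not_lt.2 (le_sSup ⟨w, rfl, hcon⟩))

/-- Dirichlet's theorem on simultaneous approximation, in exponent form for one number. -/
lemma infinite_dirichlet (x : ℝ) {u : ℝ} (hu0 : 0 ≤ u) (hu1 : u < 1) :
    {q : ℤ | ∃ p : Fin 1 → ℤ, ∀ i : Fin 1,
      |(q : ℝ) * x + (p i : ℝ)| < |(q : ℝ)| ^ (-u)}.Infinite := by
  intro hfin
  obtain ⟨c, hc, H⟩ := exists_badly_approximable_const (fun _ : Fin 1 => x) u hfin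
  have hev : ∀ᶠ N : ℕ in atTop, (N : ℝ) ^ (-(1 - u)) < c :=
    ((tendsto_rpow_neg_atTop (sub_pos.2 hu1)).comp tendsto_natCast_atTop_atTop).eventually_lt_const
      hc
  obtain ⟨N, hN, hN0⟩ := (hev.and (eventually_gt_atTop 0)).exists
  obtain ⟨j, k, hk0, hkN, hle⟩ := Real.exists_int_int_abs_mul_sub_le x hN0
  obtain ⟨i, hi⟩ := H k hk0.ne' (fun _ => -j)
  have hNR : (0 : ℝ) < N := by exact_mod_cast hN0
  have hkR : (0 : ℝ) < k := by exact_mod_cast hk0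
  have hkN' : (k : ℝ) ≤ N := by exact_mod_cast hkN
  have h1 : c * (N : ℝ) ^ (-u) ≤ 1 / (N + 1) := by
    calc c * (N : ℝ) ^ (-u) ≤ c * (k : ℝ) ^ (-u) := by
          refine mul_le_mul_of_nonneg_left ?_ hc.le
          exact Real.rpow_le_rpow_of_nonpos hkR hkN' (neg_nonpos.2 hu0)
      _ ≤ |(k : ℝ) * x - j| := by
          rw [abs_of_pos hkR] at hi
          simpa [sub_eq_add_neg] using hi
      _ ≤ _ := hle
  have h2 : (N : ℝ) ^ (-(1 - u)) * (N : ℝ) ^ (-u) = 1 / N := by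
    rw [← Real.rpow_add hNR, show -(1 - u) + -u = -1 by ring, Real.rpow_neg_one, one_div]
  have h3 : 1 / ((N : ℝ) + 1) < 1 / N := by
    apply one_div_lt_one_div_of_lt hNR; linarith
  have h4 : (0 : ℝ) < (N : ℝ) ^ (-u) := by positivity
  nlinarith

lemma natCast_le_omegaT {n : ℕ} (hn : 0 < n) (y : Fin n → ℝ) : (n : EReal) ≤ omegaT y := by
  rw [← EReal.ge_of_forall_gt_iff_ge]
  intro v' hv'
  have hnR : (0 : ℝ) < n := by exact_mod_cast hn
  have hv'n : v' < n := by
    rw [← EReal.coe_natCast] at hv'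
    exact_mod_cast hv'
  set v := max v' 0 with hv
  have hvn : v < n := max_lt hv'n hnR
  refine le_trans (EReal.coe_le_coe_iff.2 (le_max_left v' 0)) (le_sSup ⟨v, rfl, ?_⟩)
  have hinf := infinite_dirichlet (y ⟨0, hn⟩) (u := v / n) (by positivity)
    ((div_lt_one hnR).2 hvn)
  have hinf' := (hinf.sdiff (Set.finite_singleton 0)).image
    (f := fun k => (Pi.single ⟨0, hn⟩ k : Fin n → ℤ))
    (Function.Injective.injOn (Pi.single_injective (M := fun _ : Fin n => ℤ) ⟨0, hn⟩))
  refine hinf'.mono ?_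
  rintro _ ⟨k, ⟨⟨p, hp⟩, hk⟩, rfl⟩
  have hk0 : k ≠ 0 := by simpa using hk
  refine ⟨p 0, ?_⟩
  rw [prodTimes_single _ hk0, Finset.sum_eq_single ⟨0, hn⟩]
  · simpa using hp 0
  · intro j _ hj
    simp [hj]
  · simp

/-- Points with well-separated heights `h` and sizes `κ` give a convergent series: the map sending a
point to the dyadic scale of `κ` and the cell of `h` at the matching length is injective. -/
lemma summable_rpow_div_of_separated {I : Type*} (h : I → ℤ) (κ : I → ℝ) {c w t : ℝ} (hc : 0 < c)
    (hw : 0 < w) (hwt : w < t) (ht : 1 < t) (hκ0 : ∀ i, 0 < κ i) (hκ1 : ∀ i, κ i ≤ 1)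
    (h0 : ∀ i, h i ≠ 0) (H1 : ∀ i, c * |(h i : ℝ)| ^ (-w) ≤ κ i)
    (H2 : ∀ i j, i ≠ j → h i ≠ h j ∧ c * |(h i : ℝ) - h j| ^ (-w) ≤ max (κ i) (κ j)) :
    Summable (fun i => |(h i : ℝ)| ^ (-t) / κ i) := by
  have hk : ∀ i, ∃ k : ℕ, (2 : ℝ) ^ k ≤ 1 / κ i ∧ 1 / κ i < 2 ^ (k + 1) := fun i =>
    exists_nat_pow_near (by rw [le_div_iff₀ (hκ0 i)]; linarith [hκ1 i]) one_lt_two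
  choose k hk1 hk2 using hk
  set g : ℕ → ℝ := fun n => (c * 2 ^ n) ^ (1 / w) with hg
  have hgpos : ∀ n, 0 < g n := fun n => by positivity
  have hκk : ∀ i, κ i ≤ 1 / 2 ^ k i := fun i => by
    rw [le_div_iff₀ (by positivity)]
    have := hk1 i
    rw [le_div_iff₀ (hκ0 i)] at this
    linarith
  -- a real number whose `w`-th power bounds `κ` from below is at least the cell length
  have hlen : ∀ (n : ℕ) (X : ℝ), 0 < X → c * X ^ (-w) ≤ 1 / 2 ^ n → g n ≤ X := by
    intro n X hX hle
    have h2n : (0 : ℝ) < 2 ^ n := by positivity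
    rw [Real.rpow_neg hX.le, le_div_iff₀ h2n, mul_right_comm,
      ← div_eq_mul_inv, div_le_one (by positivity)] at hle
    calc g n ≤ (X ^ w) ^ (1 / w) := by
          apply Real.rpow_le_rpow (by positivity) hle (by positivity)
      _ = X := by rw [← Real.rpow_mul hX.le, mul_one_div_cancel hw.ne', Real.rpow_one]
  have habs : ∀ i, 0 < |(h i : ℝ)| := fun i => abs_pos.2 (by exact_mod_cast h0 i)
  have hgh : ∀ i, g (k i) ≤ |(h i : ℝ)| := fun i =>
    hlen _ _ (habs i) ((H1 i).trans (hκk i))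
  set F : I → ℕ × ℤ := fun i => (k i, ⌊(h i : ℝ) / g (k i)⌋) with hF
  have hinj : Function.Injective F := by
    intro i j hij
    by_contra hne
    obtain ⟨hh, hd⟩ := H2 i j hne
    have hkk : k i = k j := congrArg Prod.fst hij
    have hfl : ⌊(h i : ℝ) / g (k i)⌋ = ⌊(h j : ℝ) / g (k j)⌋ := congrArg Prod.snd hij
    rw [← hkk] at hfl
    have h1 := Int.abs_sub_lt_one_of_floor_eq_floor hfl
    rw [← sub_div, abs_div, abs_of_pos (hgpos _), div_lt_one (hgpos _)] at h1
    have h2 : g (k i) ≤ |(h i : ℝ) - h j| := by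
      apply hlen
      · exact abs_pos.2 (sub_ne_zero.2 (by exact_mod_cast hh))
      · exact hd.trans (max_le (hκk i) (hkk ▸ hκk j))
    linarith
  have hsum : Summable (fun x : ℕ × ℤ => ((2 : ℝ) ^ (1 - t / w)) ^ x.1 * |(x.2 : ℝ)| ^ (-t)) := by
    refine Summable.mul_of_nonneg (summable_geometric_of_lt_one (by positivity) ?_)
      (Real.summable_abs_int_rpow ht) (fun n => by positivity) (fun n => by positivity)
    apply Real.rpow_lt_one_of_one_lt_of_neg one_lt_two
    rw [sub_neg, one_lt_div hw]; exact hwt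
  refine Summable.of_nonneg_of_le (fun i => div_nonneg (by positivity) (hκ0 i).le) (fun i => ?_)
    ((hsum.comp_injective hinj).mul_left (2 * (1 / 2) ^ (-t) * c ^ (-(t / w))))
  set J : ℤ := ⌊(h i : ℝ) / g (k i)⌋ with hJ
  have hq : 1 ≤ |(h i : ℝ) / g (k i)| := by
    rw [abs_div, abs_of_pos (hgpos _), one_le_div (hgpos _)]; exact hgh i
  have hJ0 : J ≠ 0 := by
    intro h0'
    rw [hJ, Int.floor_eq_zero_iff] at h0'
    rw [abs_of_nonneg h0'.1] at hq
    exact absurd h0'.2 (not_lt.2 hq)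
  have hJpos : 0 < |(J : ℝ)| := abs_pos.2 (by exact_mod_cast hJ0)
  have hJle : |(J : ℝ)| ≤ 2 * |(h i : ℝ) / g (k i)| := by
    have e1 := Int.floor_le ((h i : ℝ) / g (k i))
    have e2 := Int.lt_floor_add_one ((h i : ℝ) / g (k i))
    rw [← hJ] at e1 e2
    rcases abs_cases (J : ℝ) with ⟨e, _⟩ | ⟨e, _⟩ <;>
    rcases abs_cases ((h i : ℝ) / g (k i)) with ⟨e', _⟩ | ⟨e', _⟩ <;> rw [e] <;> linarith
  have hlow : 1 / 2 * |(J : ℝ)| * g (k i) ≤ |(h i : ℝ)| := by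
    rw [abs_div, abs_of_pos (hgpos _)] at hJle
    have := mul_le_mul_of_nonneg_right hJle (hgpos (k i)).le
    rw [mul_assoc, div_mul_cancel₀ _ (hgpos _).ne'] at this
    linarith
  have hκinv : 1 / κ i ≤ 2 * 2 ^ k i := by
    have := hk2 i
    rw [pow_succ] at this
    linarith
  have hgt : g (k i) ^ (-t) = c ^ (-(t / w)) * ((2 : ℝ) ^ (-(t / w))) ^ k i := by
    have h2 : (0 : ℝ) < 2 ^ k i := by positivity
    rw [hg]
    simp only
    rw [← Real.rpow_mul (by positivity), show 1 / w * -t = -(t / w) by ring,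
      Real.mul_rpow hc.le h2.le, Real.rpow_pow_comm (by norm_num)]
  have h2t : ((2 : ℝ) ^ (1 - t / w)) ^ k i = 2 ^ k i * ((2 : ℝ) ^ (-(t / w))) ^ k i := by
    rw [← mul_pow, show (1 - t / w) = 1 + -(t / w) by ring, Real.rpow_add two_pos, Real.rpow_one]
  calc |(h i : ℝ)| ^ (-t) / κ i = |(h i : ℝ)| ^ (-t) * (1 / κ i) := by ring
    _ ≤ (1 / 2 * |(J : ℝ)| * g (k i)) ^ (-t) * (2 * 2 ^ k i) := by
        have hpos : 0 < 1 / 2 * |(J : ℝ)| * g (k i) := mul_pos (by positivity) (hgpos _)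
        exact mul_le_mul (Real.rpow_le_rpow_of_nonpos hpos hlow (by linarith)) hκinv
          (one_div_pos.2 (hκ0 i)).le (Real.rpow_nonneg hpos.le _)
    _ = 2 * (1 / 2) ^ (-t) * c ^ (-(t / w))
          * (((2 : ℝ) ^ (1 - t / w)) ^ k i * |(J : ℝ)| ^ (-t)) := by
        rw [Real.mul_rpow (by positivity) (hgpos _).le, Real.mul_rpow (by norm_num) hJpos.le, hgt,
          h2t]
        ring

/-- The slab `|c·x + e| < ε` in the cube of side `2N`, for `c` with a nonzero coordinate `c j`. -/
lemma volume_slab_le {m : ℕ} (c : Fin m → ℝ) (j : Fin m) (hj : c j ≠ 0) (e N ε : ℝ) :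
    volume {x : Fin m → ℝ | (∀ i, |x i| ≤ N) ∧ |∑ i, c i * x i + e| < ε}
      ≤ ENNReal.ofReal (|c j|⁻¹ * (2 * ε) * (2 * N) ^ (m - 1)) := by
  by_cases hε : 0 < ε
  swap
  · have : {x : Fin m → ℝ | (∀ i, |x i| ≤ N) ∧ |∑ i, c i * x i + e| < ε} = ∅ := by
      ext x
      simp only [Set.mem_ofPred_eq, Set.mem_empty_iff_false, iff_false, not_and, not_lt]
      intro _
      exact (not_lt.1 hε).trans (abs_nonneg _)
    rw [this]; simp
  by_cases hN : 0 ≤ N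
  swap
  · have : {x : Fin m → ℝ | (∀ i, |x i| ≤ N) ∧ |∑ i, c i * x i + e| < ε} = ∅ := by
      ext x
      simp only [Set.mem_ofPred_eq, Set.mem_empty_iff_false, iff_false, not_and, not_lt]
      intro h
      exact absurd ((abs_nonneg _).trans (h j)) hN
    rw [this]; simp
  set A : Matrix (Fin m) (Fin m) ℝ := (1 : Matrix (Fin m) (Fin m) ℝ).updateRow j c with hA
  have hdet : A.det = c j := by
    have h1 := congrFun (congrArg (fun f => f c) (Matrix.cramer_one (n := Fin m) (α := ℝ))) j
    have h2 : Matrix.cramer (1 : Matrix (Fin m) (Fin m) ℝ) c j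
        = (Matrix.updateCol 1 j c).det := Matrix.cramer_apply _ _ _
    rw [hA, ← Matrix.det_transpose, ← Matrix.updateCol_transpose, Matrix.transpose_one, ← h2]
    simp [Matrix.cramer_one]
  have hdetL : LinearMap.det (Matrix.toLin' A) = c j := by rw [LinearMap.det_toLin', hdet]
  set S : Fin m → Set ℝ := fun i => if i = j then ball (-e) ε else Icc (-N) N with hS
  have hsub : {x : Fin m → ℝ | (∀ i, |x i| ≤ N) ∧ |∑ i, c i * x i + e| < ε}
      ⊆ Matrix.toLin' A ⁻¹' (Set.univ.pi S) := by
    rintro x ⟨hx, hs⟩ i -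
    rw [Matrix.toLin'_apply]
    by_cases hij : i = j
    · subst hij
      have : (A.mulVec x) i = ∑ l, c l * x l := by
        simp [Matrix.mulVec, dotProduct, hA]
      simp only [hS, if_true, this, mem_ball, Real.dist_eq]
      simpa using hs
    · have : (A.mulVec x) i = x i := by
        simp [Matrix.mulVec, dotProduct, hA, Matrix.updateRow_ne hij, Matrix.one_apply]
      simp only [hS, if_neg hij, this]
      exact abs_le.1 (hx i)
  refine (measure_mono hsub).trans ?_
  rw [Measure.addHaar_preimage_linearMap _ (by rw [hdetL]; exact hj), hdetL, volume_pi_pi,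
    ← Finset.mul_prod_erase _ _ (Finset.mem_univ j)]
  have hprod : ∏ i ∈ Finset.univ.erase j, volume (S i) = ENNReal.ofReal ((2 * N) ^ (m - 1)) := by
    rw [Finset.prod_congr rfl (g := fun _ => ENNReal.ofReal (2 * N))]
    · rw [Finset.prod_const, Finset.card_erase_of_mem (Finset.mem_univ _), Finset.card_univ,
        Fintype.card_fin, ENNReal.ofReal_pow (by positivity)]
    · intro i hi
      have : i ≠ j := Finset.ne_of_mem_erase hi
      simp only [hS, if_neg this, Real.volume_Icc]
      congr 1; ring
  rw [hprod]
  simp only [hS, if_true, Real.volume_ball]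
  rw [← ENNReal.ofReal_mul (by positivity), ← ENNReal.ofReal_mul (by positivity), abs_inv,
    ← mul_assoc]

/-- The points of a cube where an affine form with linear part `c` is `ε`-close to an integer. -/
lemma volume_near_integer_le {m : ℕ} (c : Fin m → ℝ) (hc : c ≠ 0) (d N ε : ℝ) (hN : 0 ≤ N)
    (hε0 : 0 ≤ ε) (hε : ε ≤ 1) :
    volume {x : Fin m → ℝ | (∀ i, |x i| ≤ N) ∧ ∃ p : ℤ, |∑ i, c i * x i + d + p| < ε}
      ≤ ENNReal.ofReal (2 * (2 * N) ^ (m - 1) * (3 + 2 * m * N) * (ε * (1 + 1 / ‖c‖))) := by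
  have hne : Nonempty (Fin m) := by
    by_contra h
    rw [not_nonempty_iff] at h
    exact hc (Subsingleton.elim _ _)
  obtain ⟨j, hj⟩ := Finite.exists_max (fun i => |c i|)
  have hjn : |c j| = ‖c‖ := by
    refine le_antisymm (norm_le_pi_norm c j) ?_
    exact (pi_norm_le_iff_of_nonneg (abs_nonneg _)).2 hj
  have hκ : 0 < ‖c‖ := norm_pos_iff.2 hc
  have hcj : c j ≠ 0 := by
    rw [← abs_pos, hjn]; exact hκ
  set κ := ‖c‖ with hκd
  set R : ℝ := 1 + m * N * κ with hR
  have hR0 : 0 ≤ R := by positivity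
  set T : Finset ℤ := Finset.Icc ⌈-d - R⌉ ⌊-d + R⌋ with hT
  have hsub : {x : Fin m → ℝ | (∀ i, |x i| ≤ N) ∧ ∃ p : ℤ, |∑ i, c i * x i + d + p| < ε}
      ⊆ ⋃ p ∈ T, {x : Fin m → ℝ | (∀ i, |x i| ≤ N) ∧ |∑ i, c i * x i + (d + p)| < ε} := by
    rintro x ⟨hx, p, hp⟩
    have hs : |∑ i, c i * x i| ≤ m * N * κ := by
      calc |∑ i, c i * x i| ≤ ∑ i, |c i * x i| := Finset.abs_sum_le_sum_abs _ _
        _ ≤ ∑ _i : Fin m, κ * N := by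
            refine Finset.sum_le_sum fun i _ => ?_
            rw [abs_mul]
            exact mul_le_mul (norm_le_pi_norm c i) (hx i) (abs_nonneg _) hκ.le
        _ = _ := by simp; ring
    rw [abs_le] at hs
    have hp' := abs_lt.1 hp
    simp only [Set.mem_iUnion]
    refine ⟨p, ?_, hx, by rwa [← add_assoc]⟩
    rw [hT, Finset.mem_Icc, Int.ceil_le, Int.le_floor]
    constructor <;> linarith [hs.1, hs.2, hp'.1, hp'.2]
  have hcard : (T.card : ℝ) ≤ 3 + 2 * m * N * κ := by
    rw [hT, Int.card_Icc]
    have h1 := Int.le_ceil (-d - R)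
    have h2 := Int.floor_le (-d + R)
    have h3 : ((⌊-d + R⌋ + 1 - ⌈-d - R⌉ : ℤ) : ℝ) ≤ 2 * R + 1 := by push_cast; linarith
    have h4 : ((⌊-d + R⌋ + 1 - ⌈-d - R⌉).toNat : ℝ)
        = max ((⌊-d + R⌋ + 1 - ⌈-d - R⌉ : ℤ) : ℝ) 0 := by
      rw [← Int.cast_natCast, Int.toNat_eq_max]; push_cast; rfl
    rw [h4]
    refine max_le (h3.trans ?_) (by positivity)
    rw [hR]; linarith
  calc _ ≤ _ := measure_mono hsub
    _ ≤ ∑ p ∈ T, volume {x : Fin m → ℝ | (∀ i, |x i| ≤ N) ∧ |∑ i, c i * x i + (d + p)| < ε} :=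
        measure_biUnion_finset_le _ _
    _ ≤ ∑ _p ∈ T, ENNReal.ofReal (κ⁻¹ * (2 * ε) * (2 * N) ^ (m - 1)) := by
        refine Finset.sum_le_sum fun p _ => ?_
        have := volume_slab_le c j hcj (d + p) N ε
        rwa [hjn] at this
    _ = ENNReal.ofReal (T.card * (κ⁻¹ * (2 * ε) * (2 * N) ^ (m - 1))) := by
        rw [Finset.sum_const, nsmul_eq_mul, ENNReal.ofReal_mul (Nat.cast_nonneg _),
          ENNReal.ofReal_natCast]
    _ ≤ _ := by
        apply ENNReal.ofReal_le_ofReal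
        calc T.card * (κ⁻¹ * (2 * ε) * (2 * N) ^ (m - 1))
            ≤ (3 + 2 * m * N * κ) * (κ⁻¹ * (2 * ε) * (2 * N) ^ (m - 1)) := by gcongr
          _ = 2 * (2 * N) ^ (m - 1) * ε * (3 * (1 / κ) + 2 * m * N) := by field_simp
          _ ≤ 2 * (2 * N) ^ (m - 1) * ε * ((3 + 2 * m * N) * (1 + 1 / κ)) := by
              gcongr
              have h1 : 0 ≤ 1 / κ := by positivity
              have h2 : 0 ≤ 2 * m * N := by positivity
              nlinarith [mul_nonneg h1 h2]
          _ = _ := by ring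

/-- Borel–Cantelli with a real majorant valid for all but finitely many sets. -/
lemma ae_finite_of_eventually_le {α ι : Type*} [MeasurableSpace α] [Countable ι] {μ : Measure α}
    {E : ι → Set α} {g : ι → ℝ} (hg : Summable g)
    (h : ∀ᶠ i in cofinite, μ (E i) ≤ ENNReal.ofReal (g i)) :
    ∀ᵐ x ∂μ, {i | x ∈ E i}.Finite := by
  classical
  set F : Set ι := {i | ¬ μ (E i) ≤ ENNReal.ofReal (g i)} with hF
  have hFfin : F.Finite := h
  set E' : ι → Set α := fun i => if i ∈ F then ∅ else E i with hE'
  have hsum : ∑' i, μ (E' i) ≠ ⊤ := by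
    refine ne_top_of_le_ne_top hg.tsum_ofReal_ne_top (ENNReal.tsum_le_tsum fun i => ?_)
    by_cases hi : i ∈ F
    · simp [hE', hi]
    · simp only [hE', if_neg hi]
      exact not_not.1 hi
  filter_upwards [ae_finite_setOfPred_mem hsum] with x hx
  refine (hFfin.union hx).subset fun i hi => ?_
  by_cases hiF : i ∈ F
  · exact Or.inl hiF
  · right
    change x ∈ E' i
    simp only [hE', if_neg hiF]
    exact hi

@[to_additive]
lemma prod_dite_lt_eq {M : Type*} [CommMonoid M] {r m : ℕ} (hrm : r ≤ m) (g : Fin r → M) :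
    ∏ i : Fin m, (if h : (i : ℕ) < r then g ⟨i, h⟩ else 1) = ∏ i, g i := by
  symm
  refine Finset.prod_of_injOn (Fin.castLE hrm) (Fin.castLE_injective hrm).injOn
    (fun _ _ => Finset.mem_coe.2 (Finset.mem_univ _)) (fun i _ hi => ?_) (fun i _ => ?_)
  · rw [dif_neg]
    intro h
    exact hi ⟨⟨i, h⟩, Finset.mem_coe.2 (Finset.mem_univ _), rfl⟩
  · simp

/-- Extend a vector of length `r` by zeros to length `m`. -/
noncomputable def zeroExtend (m : ℕ) {r : ℕ} (a : Fin r → ℝ) : Fin m → ℝ :=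
  fun i => if h : (i : ℕ) < r then a ⟨i, h⟩ else 0

lemma sum_zeroExtend_mul {r m : ℕ} (hrm : r ≤ m) (a : Fin r → ℝ) (x : Fin m → ℝ) :
    ∑ i, a i * x (Fin.castLE hrm i) = ∑ i, zeroExtend m a i * x i := by
  rw [← sum_dite_lt_eq hrm]
  refine Finset.sum_congr rfl fun i _ => ?_
  unfold zeroExtend
  split_ifs with h
  · rfl
  · simp

/-- The linear part, as a function of `x`, of `q·(x, α·x + b)`. -/
noncomputable def linearPart {m : ℕ} (α : Fin m → ℝ) (q : Fin (m + 1) → ℤ) : Fin m → ℝ :=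
  fun i => (q i.castSucc : ℝ) + q (Fin.last m) * α i

lemma dot_snoc {r m : ℕ} (hrm : r ≤ m) (a : Fin r → ℝ) (b : ℝ) (q : Fin (m + 1) → ℤ)
    (x : Fin m → ℝ) :
    ∑ i, (q i : ℝ) * (Fin.snoc x (∑ i, a i * x (Fin.castLE hrm i) + b) : Fin (m + 1) → ℝ) i
      = ∑ i, linearPart (zeroExtend m a) q i * x i + q (Fin.last m) * b := by
  rw [Fin.sum_univ_castSucc, sum_zeroExtend_mul]
  simp only [Fin.snoc_castSucc, Fin.snoc_last, linearPart, add_mul, Finset.sum_add_distrib,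
    mul_add, Finset.mul_sum]
  rw [add_assoc]
  simp only [mul_assoc]

lemma tendsto_abs_int_cofinite : Tendsto (fun Q : ℤ => |(Q : ℝ)|) cofinite atTop := by
  refine tendsto_atTop.2 fun M => ?_
  have hfin : {Q : ℤ | ¬ M ≤ |(Q : ℝ)|}.Finite := by
    refine (Set.finite_Icc (-⌈M⌉) ⌈M⌉).subset fun Q hQ => ?_
    have hQ' : |(Q : ℝ)| < M := not_le.1 hQ
    have h1 := abs_lt.1 hQ'
    have h2 := Int.le_ceil M
    constructor
    · have : ((-⌈M⌉ : ℤ) : ℝ) ≤ Q := by push_cast; linarith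
      exact_mod_cast this
    · have : (Q : ℝ) ≤ (⌈M⌉ : ℤ) := by linarith
      exact_mod_cast this
  exact hfin

/-- Good simultaneous approximations of `(a, b)` give good integer forms at every point of the
hyperplane. -/
lemma mul_le_omegaT_snoc {r m : ℕ} (hrm : r ≤ m) (a : Fin r → ℝ) (b : ℝ) {v : ℝ} (hv : 0 < v)
    (hinf : {q : ℤ | ∃ p : Fin (r + 1) → ℤ, ∀ i,
      |(q : ℝ) * (Fin.snoc a b : Fin (r + 1) → ℝ) i + (p i : ℝ)| < |(q : ℝ)| ^ (-v)}.Infinite)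
    (x : Fin m → ℝ) :
    (((m + 1 : ℝ) / (r + 1 : ℝ) * v : ℝ) : EReal) ≤
      omegaT (Fin.snoc x (∑ i, a i * x (Fin.castLE hrm i) + b) : Fin (m + 1) → ℝ) := by
  rw [← EReal.ge_of_forall_gt_iff_ge]
  intro u₀ hu₀
  rw [EReal.coe_lt_coe_iff] at hu₀
  set u := max u₀ 0 with hu
  have hu_lt : u < (m + 1 : ℝ) / (r + 1 : ℝ) * v := max_lt hu₀ (by positivity)
  refine le_trans (EReal.coe_le_coe_iff.2 (le_max_left u₀ 0)) (le_sSup ⟨u, rfl, ?_⟩)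
  set τ : ℝ := u / ((m + 1 : ℕ) : ℝ) with hτ
  have hu0 : 0 ≤ u := le_max_right _ _
  have hτ0 : 0 ≤ τ := by positivity
  have hτv : τ * (r + 1) < v := by
    rw [div_mul_eq_mul_div, lt_div_iff₀ (by positivity)] at hu_lt
    rw [hτ, div_mul_eq_mul_div, div_lt_iff₀ (by positivity)]
    push_cast
    linarith
  set A : ℝ := ∏ i, (|a i| + 1) with hA
  have hA0 : 0 < A := Finset.prod_pos fun i _ => by positivity
  set B : ℝ := ∑ i, |x i| + 1 with hB
  have hB0 : 0 < B := by positivity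
  have hev : ∀ᶠ Q : ℤ in cofinite, B * A ^ τ < |(Q : ℝ)| ^ (v - τ * (r + 1)) ∧ 1 ≤ |(Q : ℝ)| :=
    (((tendsto_rpow_atTop (sub_pos.2 hτv)).comp tendsto_abs_int_cofinite).eventually_gt_atTop
      _).and (tendsto_abs_int_cofinite.eventually_ge_atTop 1)
  have hinf' := hinf.sdiff (Filter.mem_cofinite.1 hev)
  have hex : ∀ Q : ℤ, ∃ P : Fin (r + 1) → ℤ, (∃ p : Fin (r + 1) → ℤ, ∀ i,
      |(Q : ℝ) * (Fin.snoc a b : Fin (r + 1) → ℝ) i + (p i : ℝ)| < |(Q : ℝ)| ^ (-v)) → ∀ i,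
      |(Q : ℝ) * (Fin.snoc a b : Fin (r + 1) → ℝ) i + (P i : ℝ)| < |(Q : ℝ)| ^ (-v) := by
    intro Q
    by_cases h : ∃ p : Fin (r + 1) → ℤ, ∀ i,
      |(Q : ℝ) * (Fin.snoc a b : Fin (r + 1) → ℝ) i + (p i : ℝ)| < |(Q : ℝ)| ^ (-v)
    · obtain ⟨p, hp⟩ := h
      exact ⟨p, fun _ => hp⟩
    · exact ⟨0, fun h' => absurd h' h⟩
  choose P hP using hex
  set φ : ℤ → Fin (m + 1) → ℤ := fun Q =>
    Fin.snoc (fun i : Fin m => if h : (i : ℕ) < r then P Q (Fin.castSucc ⟨i, h⟩) else 0) Q with hφ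
  have hφinj : Function.Injective φ := fun Q Q' h => by
    have := congrFun h (Fin.last m)
    simpa [hφ] using this
  refine (hinf'.image hφinj.injOn).mono ?_
  rintro _ ⟨Q, ⟨hQ, hQev⟩, rfl⟩
  have hQev' : B * A ^ τ < |(Q : ℝ)| ^ (v - τ * (r + 1)) ∧ 1 ≤ |(Q : ℝ)| := not_not.1 hQev
  obtain ⟨hlarge, hQ1⟩ := hQev'
  have hQpos : 0 < |(Q : ℝ)| := by linarith
  have hPQ := hP Q hQ
  have hδ0 : 0 < |(Q : ℝ)| ^ (-v) := by positivity
  have hδ1 : |(Q : ℝ)| ^ (-v) ≤ 1 := Real.rpow_le_one_of_one_le_of_nonpos hQ1 (by linarith)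
  have hPa : ∀ i : Fin r, |(Q : ℝ) * a i + P Q i.castSucc| < |(Q : ℝ)| ^ (-v) := fun i => by
    simpa using hPQ i.castSucc
  have hPb : |(Q : ℝ) * b + P Q (Fin.last r)| < |(Q : ℝ)| ^ (-v) := by
    simpa using hPQ (Fin.last r)
  have hprod : prodTimes (φ Q) ≤ A * |(Q : ℝ)| ^ (r + 1) := by
    have hQ0 : Q ≠ 0 := by rintro rfl; simp at hQ1; linarith
    rw [prodTimes, Fin.prod_univ_castSucc]
    simp only [hφ, Fin.snoc_castSucc, Fin.snoc_last, if_neg hQ0]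
    rw [pow_succ, ← mul_assoc]
    refine mul_le_mul_of_nonneg_right ?_ hQpos.le
    calc _ ≤ ∏ i : Fin m, (if h : (i : ℕ) < r then (|a ⟨i, h⟩| + 1) * |(Q : ℝ)| else 1) := by
          refine Finset.prod_le_prod
            (fun i _ => zero_le_one.trans (prodTimes_factor_ge_one _)) (fun i _ => ?_)
          by_cases h : (i : ℕ) < r
          · simp only [dif_pos h]
            have h2 := abs_nonneg (a ⟨i, h⟩)
            split_ifs with h0
            · nlinarith
            · have h1 := hPa ⟨i, h⟩
              have h3 : |(P Q (Fin.castSucc ⟨i, h⟩) : ℝ)|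
                  ≤ |(Q : ℝ) * a ⟨i, h⟩ + P Q (Fin.castSucc ⟨i, h⟩)| + |(Q : ℝ) * a ⟨i, h⟩| := by
                have := abs_sub (Q * a ⟨i, h⟩ + P Q (Fin.castSucc ⟨i, h⟩)) (Q * a ⟨i, h⟩)
                simpa using this
              rw [abs_mul] at h3
              nlinarith
          · simp [dif_neg h]
      _ = ∏ i : Fin r, ((|a i| + 1) * |(Q : ℝ)|) :=
          prod_dite_lt_eq hrm fun i => (|a i| + 1) * |(Q : ℝ)|
      _ = A * |(Q : ℝ)| ^ r := by rw [Finset.prod_mul_distrib]; simp [hA]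
  refine ⟨P Q (Fin.last r), ?_⟩
  rw [dot_snoc]
  have hlast : φ Q (Fin.last m) = Q := by simp [hφ]
  have hcoef : ∀ i, |linearPart (zeroExtend m a) (φ Q) i| ≤ |(Q : ℝ)| ^ (-v) := by
    intro i
    rw [linearPart, hlast]
    simp only [hφ, Fin.snoc_castSucc, zeroExtend]
    by_cases h : (i : ℕ) < r
    · simp only [dif_pos h]
      rw [add_comm]
      exact (hPa ⟨i, h⟩).le
    · simp only [dif_neg h]
      simpa using hδ0.le
  rw [hlast]
  calc |∑ i, linearPart (zeroExtend m a) (φ Q) i * x i + Q * b + P Q (Fin.last r)|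
      ≤ |∑ i, linearPart (zeroExtend m a) (φ Q) i * x i| + |Q * b + P Q (Fin.last r)| := by
        rw [add_assoc]; exact abs_add_le _ _
    _ ≤ ∑ i, |(Q : ℝ)| ^ (-v) * |x i| + |(Q : ℝ)| ^ (-v) := by
        refine add_le_add ((Finset.abs_sum_le_sum_abs _ _).trans
          (Finset.sum_le_sum fun i _ => ?_)) hPb.le
        rw [abs_mul]
        exact mul_le_mul_of_nonneg_right (hcoef i) (abs_nonneg _)
    _ = |(Q : ℝ)| ^ (-v) * B := by rw [← Finset.mul_sum, hB]; ring
    _ < (A * |(Q : ℝ)| ^ (r + 1)) ^ (-τ) := by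
        rw [Real.mul_rpow hA0.le (by positivity), ← Real.rpow_natCast, ← Real.rpow_mul hQpos.le]
        have e1 : |(Q : ℝ)| ^ (((r + 1 : ℕ) : ℝ) * -τ)
            = |(Q : ℝ)| ^ (-v) * |(Q : ℝ)| ^ (v - τ * (r + 1)) := by
          rw [← Real.rpow_add hQpos]; congr 1; push_cast; ring
        have e2 : A ^ (-τ) * A ^ τ = 1 := by rw [← Real.rpow_add hA0]; simp
        have hAτ : 0 < A ^ (-τ) := by positivity
        rw [e1]
        calc |(Q : ℝ)| ^ (-v) * B = |(Q : ℝ)| ^ (-v) * (A ^ (-τ) * (B * A ^ τ)) := by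
              rw [mul_left_comm (A ^ (-τ)), e2, mul_one]
          _ < |(Q : ℝ)| ^ (-v) * (A ^ (-τ) * |(Q : ℝ)| ^ (v - τ * (r + 1))) := by gcongr
          _ = _ := by ring
    _ ≤ prodTimes (φ Q) ^ (-τ) :=
        Real.rpow_le_rpow_of_nonpos (zero_lt_one.trans_le (one_le_prodTimes _)) hprod (by linarith)

lemma linearPart_sub {m : ℕ} (α : Fin m → ℝ) (q q' : Fin (m + 1) → ℤ) :
    linearPart α (q - q') = linearPart α q - linearPart α q' := by
  ext i
  simp only [linearPart, Pi.sub_apply]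
  push_cast
  ring

lemma injOn_last_of_norm_linearPart_lt {m : ℕ} (α : Fin m → ℝ) :
    Set.InjOn (fun q : Fin (m + 1) → ℤ => q (Fin.last m)) {q | ‖linearPart α q‖ < 1 / 2} := by
  intro q hq q' hq' h
  have hq1 : ‖linearPart α q‖ < 1 / 2 := hq
  have hq2 : ‖linearPart α q'‖ < 1 / 2 := hq'
  have h' : q (Fin.last m) = q' (Fin.last m) := h
  ext i
  refine Fin.lastCases h' (fun j => ?_) i
  have h1 := abs_lt.1 ((norm_le_pi_norm (linearPart α q) j).trans_lt hq1)
  have h2 := abs_lt.1 ((norm_le_pi_norm (linearPart α q') j).trans_lt hq2)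
  simp only [linearPart, h'] at h1 h2
  have h3 : ((q j.castSucc : ℝ)) < q' j.castSucc + 1 := by linarith [h1.2, h2.1]
  have h4 : ((q' j.castSucc : ℝ)) < q j.castSucc + 1 := by linarith [h1.1, h2.2]
  have h3' : q j.castSucc < q' j.castSucc + 1 := by exact_mod_cast h3
  have h4' : q' j.castSucc < q j.castSucc + 1 := by exact_mod_cast h4
  omega

lemma mul_pow_le_prodTimes {r m : ℕ} (hrm : r ≤ m) (a : Fin r → ℝ) (q : Fin (m + 1) → ℤ)
    (hq : ‖linearPart (zeroExtend m a) q‖ < 1 / 2) (hlast : q (Fin.last m) ≠ 0) :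
    (∏ i, |a i| / 2) * |(q (Fin.last m) : ℝ)| ^ (r + 1) ≤ prodTimes q := by
  rw [prodTimes, Fin.prod_univ_castSucc, if_neg hlast, pow_succ, ← mul_assoc]
  refine mul_le_mul_of_nonneg_right ?_ (abs_nonneg _)
  set Q : ℝ := (q (Fin.last m) : ℝ) with hQ
  calc (∏ i, |a i| / 2) * |Q| ^ r = ∏ i : Fin r, (|a i| / 2 * |Q|) := by
        rw [Finset.prod_mul_distrib]; simp
    _ = ∏ i : Fin m, (if h : (i : ℕ) < r then |a ⟨i, h⟩| / 2 * |Q| else 1) :=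
        (prod_dite_lt_eq hrm _).symm
    _ ≤ _ := by
        refine Finset.prod_le_prod (fun i _ => ?_) (fun i _ => ?_)
        · split_ifs <;> positivity
        · by_cases h : (i : ℕ) < r
          · rw [dif_pos h]
            have h1 := (norm_le_pi_norm (linearPart (zeroExtend m a) q) i).trans_lt hq
            simp only [linearPart, zeroExtend, dif_pos h, Real.norm_eq_abs, ← hQ] at h1
            have h2 : |Q * a ⟨i, h⟩| ≤ |(q i.castSucc : ℝ) + Q * a ⟨i, h⟩| + |(q i.castSucc : ℝ)| := by
              have := abs_sub ((q i.castSucc : ℝ) + Q * a ⟨i, h⟩) (q i.castSucc : ℝ)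
              simpa using this
            rw [abs_mul] at h2
            have h3 : |(q i.castSucc : ℝ)| ≤ if q i.castSucc = 0 then 1 else |(q i.castSucc : ℝ)| := by
              split_ifs with h0
              · simp [h0]
              · exact le_rfl
            have h4 := prodTimes_factor_ge_one (q i.castSucc)
            nlinarith
          · rw [dif_neg h]
            exact prodTimes_factor_ge_one _

/-- The points of a cube at which the form with coefficients `q`, restricted to the hyperplane,
is close to an integer. -/
def nearSet {m : ℕ} (α : Fin m → ℝ) (b N u : ℝ) (q : Fin (m + 1) → ℤ) : Set (Fin m → ℝ) :=
  {x | (∀ i, |x i| ≤ N) ∧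
    ∃ p : ℤ, |∑ i, linearPart α q i * x i + q (Fin.last m) * b + p| < prodTimes q ^ (-u)}

lemma ae_finite_nearSet {r m : ℕ} (hrm : r ≤ m) (a : Fin r → ℝ) (ha : ∀ i, a i ≠ 0) (b : ℝ)
    {u w N : ℝ} (hu : 1 < u) (hw : 0 < w) (hN : 0 ≤ N) (hwu : w < (r + 1) * u)
    (hfin : {q : ℤ | ∃ p : Fin (r + 1) → ℤ, ∀ i,
      |(q : ℝ) * (Fin.snoc a b : Fin (r + 1) → ℝ) i + (p i : ℝ)| < |(q : ℝ)| ^ (-w)}.Finite) :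
    ∀ᵐ x : Fin m → ℝ, {q | x ∈ nearSet (zeroExtend m a) b N u q}.Finite := by
  classical
  obtain ⟨c, hc, hsep⟩ := exists_badly_approximable_const _ w hfin
  set α := zeroExtend m a with hα
  set E := nearSet α b N u with hE
  set t : ℝ := (r + 1) * u with ht
  have hr0 : (0 : ℝ) ≤ r := Nat.cast_nonneg r
  have ht1 : 1 < t := by nlinarith
  have hsep' : ∀ q : Fin (m + 1) → ℤ, q (Fin.last m) ≠ 0 → ∀ p : ℤ,
      c * |(q (Fin.last m) : ℝ)| ^ (-w)
        ≤ max ‖linearPart α q‖ |(q (Fin.last m) : ℝ) * b + p| := by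
    intro q hq p
    obtain ⟨i, hi⟩ := hsep _ hq
      (Fin.snoc (fun i : Fin r => q (Fin.castLE hrm i).castSucc) p : Fin (r + 1) → ℤ)
    refine hi.trans ?_
    refine Fin.lastCases ?_ (fun j => ?_) i
    · simp
    · refine le_max_of_le_left (le_trans (le_of_eq ?_)
        (norm_le_pi_norm (linearPart α q) (Fin.castLE hrm j)))
      simp [linearPart, hα, zeroExtend, add_comm]
  set C₀ : ℝ := ∏ i, |a i| / 2 with hC₀
  have hC₀pos : 0 < C₀ := Finset.prod_pos fun i _ => by have := abs_pos.2 (ha i); positivity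
  have hε : ∀ q : Fin (m + 1) → ℤ, ‖linearPart α q‖ < 1 / 2 → q (Fin.last m) ≠ 0 →
      prodTimes q ^ (-u) ≤ C₀ ^ (-u) * |(q (Fin.last m) : ℝ)| ^ (-t) := by
    intro q hq h0
    have hQ : 0 < |(q (Fin.last m) : ℝ)| := abs_pos.2 (by exact_mod_cast h0)
    calc prodTimes q ^ (-u) ≤ (C₀ * |(q (Fin.last m) : ℝ)| ^ (r + 1)) ^ (-u) :=
          Real.rpow_le_rpow_of_nonpos (by positivity) (mul_pow_le_prodTimes hrm a q hq h0)
            (by linarith)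
      _ = _ := by
          rw [Real.mul_rpow hC₀pos.le (by positivity), ← Real.rpow_natCast, ← Real.rpow_mul hQ.le]
          congr 2
          rw [ht]; push_cast; ring
  have hev : ∀ᶠ Q : ℤ in cofinite,
      C₀ ^ (-u) * |(Q : ℝ)| ^ (-(t - w)) < c / 2 ∧ 1 ≤ |(Q : ℝ)| := by
    have h1 : Tendsto (fun Q : ℤ => C₀ ^ (-u) * |(Q : ℝ)| ^ (-(t - w))) cofinite (nhds 0) := by
      have := ((tendsto_rpow_neg_atTop (sub_pos.2 hwu)).comp tendsto_abs_int_cofinite).const_mul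
        (C₀ ^ (-u))
      simpa using this
    exact (h1.eventually_lt_const (by positivity)).and
      (tendsto_abs_int_cofinite.eventually_ge_atTop 1)
  set S : Set (Fin (m + 1) → ℤ) := {q | ‖linearPart α q‖ < 1 / 2 ∧
    (C₀ ^ (-u) * |(q (Fin.last m) : ℝ)| ^ (-(t - w)) < c / 2 ∧ 1 ≤ |(q (Fin.last m) : ℝ)|) ∧
    (E q).Nonempty} with hS
  set K₁ : ℝ := 1 + 2 * m * N with hK₁
  have hmN : 0 ≤ (m : ℝ) * N := by positivity
  have hK₁1 : 1 ≤ K₁ := by rw [hK₁]; linarith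
  have hS0 : ∀ q ∈ S, q (Fin.last m) ≠ 0 := by
    rintro q ⟨-, ⟨-, h⟩, -⟩ h0
    rw [h0] at h
    simp at h
    linarith
  have hSκ : ∀ q ∈ S, c / (2 * K₁) * |(q (Fin.last m) : ℝ)| ^ (-w) ≤ ‖linearPart α q‖ ∧
      ∃ p : ℤ, |(q (Fin.last m) : ℝ) * b + p| ≤ K₁ * ‖linearPart α q‖ := by
    intro q hq
    have h0 := hS0 q hq
    obtain ⟨hq1, ⟨hq2, hq3⟩, x, hx, p, hp⟩ := hq
    have hQ : 0 < |(q (Fin.last m) : ℝ)| := by linarith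
    set κ := ‖linearPart α q‖ with hκ
    have hκ0 : 0 ≤ κ := norm_nonneg _
    have hε' : prodTimes q ^ (-u) ≤ c / 2 * |(q (Fin.last m) : ℝ)| ^ (-w) := by
      refine (hε q hq1 h0).trans ?_
      have : |(q (Fin.last m) : ℝ)| ^ (-t)
          = |(q (Fin.last m) : ℝ)| ^ (-(t - w)) * |(q (Fin.last m) : ℝ)| ^ (-w) := by
        rw [← Real.rpow_add hQ]; congr 1; ring
      rw [this, ← mul_assoc]
      exact mul_le_mul_of_nonneg_right hq2.le (by positivity)
    have hs : |∑ i, linearPart α q i * x i| ≤ m * N * κ := by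
      calc |∑ i, linearPart α q i * x i| ≤ ∑ i, |linearPart α q i * x i| :=
            Finset.abs_sum_le_sum_abs _ _
        _ ≤ ∑ _i : Fin m, κ * N := by
            refine Finset.sum_le_sum fun i _ => ?_
            rw [abs_mul]
            exact mul_le_mul (norm_le_pi_norm (linearPart α q) i) (hx i) (abs_nonneg _) hκ0
        _ = _ := by simp; ring
    have hb : |(q (Fin.last m) : ℝ) * b + p| ≤ prodTimes q ^ (-u) + m * N * κ := by
      have h1 := abs_sub (∑ i, linearPart α q i * x i + q (Fin.last m) * b + p)
        (∑ i, linearPart α q i * x i)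
      rw [show ∑ i, linearPart α q i * x i + q (Fin.last m) * b + p
        - ∑ i, linearPart α q i * x i = q (Fin.last m) * b + p by ring] at h1
      linarith
    have hmax := hsep' q h0 p
    have hX : 0 < c * |(q (Fin.last m) : ℝ)| ^ (-w) := by positivity
    have hlow : c / 2 * |(q (Fin.last m) : ℝ)| ^ (-w) ≤ (1 + m * N) * κ := by
      rcases le_max_iff.1 hmax with h | h
      · nlinarith
      · nlinarith
    refine ⟨?_, p, ?_⟩
    · rw [div_mul_eq_mul_div, div_le_iff₀ (by positivity), hK₁]
      nlinarith
    · rw [hK₁]; nlinarith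
  have hκpos : ∀ q ∈ S, 0 < ‖linearPart α q‖ := by
    intro q hq
    have hQ : 0 < |(q (Fin.last m) : ℝ)| := abs_pos.2 (by exact_mod_cast hS0 q hq)
    exact lt_of_lt_of_le (by positivity) (hSκ q hq).1
  have hsumS : Summable (fun q : S =>
      |((q : Fin (m + 1) → ℤ) (Fin.last m) : ℝ)| ^ (-t) / ‖linearPart α q‖) := by
    refine summable_rpow_div_of_separated (fun q : S => (q : Fin (m + 1) → ℤ) (Fin.last m))
      (fun q : S => ‖linearPart α q‖) (c := c / (2 * K₁)) (by positivity) hw hwu ht1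
      (fun q => hκpos q q.2) (fun q => by linarith [q.2.1]) (fun q => hS0 q q.2)
      (fun q => (hSκ q q.2).1) ?_
    rintro ⟨q, hq⟩ ⟨q', hq'⟩ hne
    have hne' : q (Fin.last m) ≠ q' (Fin.last m) := fun h =>
      hne (Subtype.ext (injOn_last_of_norm_linearPart_lt α hq.1 hq'.1 h))
    refine ⟨hne', ?_⟩
    obtain ⟨-, p, hp⟩ := hSκ q hq
    obtain ⟨-, p', hp'⟩ := hSκ q' hq'
    have h1 := hsep' (q - q') (by simpa [sub_ne_zero] using hne') (p - p')
    rw [linearPart_sub] at h1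
    simp only [Pi.sub_apply, Int.cast_sub] at h1
    have h2 := norm_sub_le (linearPart α q) (linearPart α q')
    have h3 : |((q (Fin.last m) : ℝ) - q' (Fin.last m)) * b + (p - p')|
        ≤ |(q (Fin.last m) : ℝ) * b + p| + |(q' (Fin.last m) : ℝ) * b + p'| := by
      rw [show ((q (Fin.last m) : ℝ) - q' (Fin.last m)) * b + (p - p')
        = (q (Fin.last m) * b + p) - (q' (Fin.last m) * b + p') by ring]
      exact abs_sub _ _
    have h4 := le_max_left ‖linearPart α q‖ ‖linearPart α q'‖
    have h5 := le_max_right ‖linearPart α q‖ ‖linearPart α q'‖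
    have h6 := hκpos q hq
    set M := max ‖linearPart α q‖ ‖linearPart α q'‖ with hM
    change c / (2 * K₁) * |(q (Fin.last m) : ℝ) - q' (Fin.last m)| ^ (-w) ≤ M
    rw [div_mul_eq_mul_div, div_le_iff₀ (by positivity)]
    have h7 : 0 ≤ (K₁ - 1) * M := mul_nonneg (by linarith) (h6.le.trans h4)
    have h8 : K₁ * ‖linearPart α q‖ ≤ K₁ * M := by gcongr
    have h9 : K₁ * ‖linearPart α q'‖ ≤ K₁ * M := by gcongr
    rcases le_max_iff.1 h1 with h | h <;> linarith
  set K : ℝ := 2 * (2 * N) ^ (m - 1) * (3 + 2 * m * N) with hK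
  have hK0 : 0 ≤ K := by positivity
  set G : (Fin (m + 1) → ℤ) → ℝ := S.indicator fun q =>
    |(q (Fin.last m) : ℝ)| ^ (-t) / ‖linearPart α q‖ with hG
  have hGsum : Summable G := summable_subtype_iff_indicator.1 hsumS
  have hG0 : ∀ q, 0 ≤ G q := fun q => Set.indicator_nonneg (fun q _ => by positivity) q
  refine ae_finite_of_eventually_le
    (((summable_prodTimes_rpow (m + 1) hu).mul_left (3 * K)).add (hGsum.mul_left (K * C₀ ^ (-u))))
    ?_
  have hbad : {q : Fin (m + 1) → ℤ | ‖linearPart α q‖ < 1 / 2 ∧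
      ¬ (C₀ ^ (-u) * |(q (Fin.last m) : ℝ)| ^ (-(t - w)) < c / 2 ∧
        1 ≤ |(q (Fin.last m) : ℝ)|)}.Finite := by
    refine Set.Finite.of_finite_image (f := fun q : Fin (m + 1) → ℤ => q (Fin.last m))
      ((Filter.mem_cofinite.1 hev).subset ?_)
      ((injOn_last_of_norm_linearPart_lt α).mono fun q hq => hq.1)
    rintro _ ⟨q, hq, rfl⟩
    exact hq.2
  filter_upwards [hbad.compl_mem_cofinite] with q hq
  have hprod := one_le_prodTimes q
  have hε0 : 0 < prodTimes q ^ (-u) := Real.rpow_pos_of_pos (by linarith) _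
  have hε1 : prodTimes q ^ (-u) ≤ 1 :=
    Real.rpow_le_one_of_one_le_of_nonpos hprod (by linarith)
  have hvol : linearPart α q ≠ 0 → volume (E q) ≤ ENNReal.ofReal
      (K * (prodTimes q ^ (-u) * (1 + 1 / ‖linearPart α q‖))) := fun hne =>
    volume_near_integer_le _ hne _ _ _ hN hε0.le hε1
  have hGq := hG0 q
  by_cases hκ : ‖linearPart α q‖ < 1 / 2
  · by_cases hne : (E q).Nonempty
    · have hqS : q ∈ S := ⟨hκ, not_not.1 fun h => hq ⟨hκ, h⟩, hne⟩
      have hκ0 := hκpos q hqS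
      refine (hvol (norm_pos_iff.1 hκ0)).trans (ENNReal.ofReal_le_ofReal ?_)
      rw [hG, Set.indicator_of_mem hqS]
      have h1 := hε q hκ (hS0 q hqS)
      have h2 : prodTimes q ^ (-u) / ‖linearPart α q‖
          ≤ C₀ ^ (-u) * (|(q (Fin.last m) : ℝ)| ^ (-t) / ‖linearPart α q‖) := by
        rw [← mul_div_assoc]; gcongr
      calc K * (prodTimes q ^ (-u) * (1 + 1 / ‖linearPart α q‖))
          = K * prodTimes q ^ (-u) + K * (prodTimes q ^ (-u) / ‖linearPart α q‖) := by ring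
        _ ≤ 3 * K * prodTimes q ^ (-u)
            + K * (C₀ ^ (-u) * (|(q (Fin.last m) : ℝ)| ^ (-t) / ‖linearPart α q‖)) := by
            refine add_le_add ?_ (mul_le_mul_of_nonneg_left h2 hK0)
            nlinarith [mul_nonneg hK0 hε0.le]
        _ = _ := by ring
    · rw [Set.not_nonempty_iff_eq_empty.1 hne]
      simp
  · have hκ2 : 1 / 2 ≤ ‖linearPart α q‖ := not_lt.1 hκ
    refine (hvol (norm_pos_iff.1 (by linarith))).trans (ENNReal.ofReal_le_ofReal ?_)
    have h1 : 1 / ‖linearPart α q‖ ≤ 2 := by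
      rw [div_le_iff₀ (by linarith)]; linarith
    have h2 : 0 ≤ K * C₀ ^ (-u) * G q := by positivity
    have h3 : K * (prodTimes q ^ (-u) * (1 + 1 / ‖linearPart α q‖))
        ≤ K * (prodTimes q ^ (-u) * 3) := by gcongr; linarith
    linarith

lemma omegaT_le_of_finite {n : ℕ} {y : Fin n → ℝ} {v : ℝ}
    (h : {q : Fin n → ℤ | ∃ p : ℤ, |(∑ i, (q i : ℝ) * y i) + (p : ℝ)| <
      (prodTimes q) ^ (-(v / (n : ℝ)))}.Finite) : omegaT y ≤ v := by
  refine sSup_le ?_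
  rintro _ ⟨v', rfl, hinf⟩
  rw [EReal.coe_le_coe_iff]
  by_contra! hlt
  refine hinf (h.subset ?_)
  rintro q ⟨p, hp⟩
  refine ⟨p, hp.trans_le (Real.rpow_le_rpow_of_exponent_le (one_le_prodTimes q) ?_)⟩
  have := div_le_div_of_nonneg_right hlt.le (Nat.cast_nonneg (α := ℝ) n)
  linarith

theorem stmt5 (m r : ℕ) (hm : 1 ≤ m) (hrm : r ≤ m) (a : Fin r → ℝ)
    (ha : ∀ i, a i ≠ 0) (b : ℝ) :
    omegaTMeas (Measure.map
        (fun x : Fin m → ℝ => Fin.snoc x (∑ i, a i * x (Fin.castLE hrm i) + b)) volume)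
      = max (((m + 1 : ℕ) : EReal))
          ((((m + 1 : ℝ) / (r + 1 : ℝ) : ℝ) : EReal) * sigmaV (Fin.snoc a b)) := by
  set f : (Fin m → ℝ) → (Fin (m + 1) → ℝ) :=
    fun x => Fin.snoc x (∑ i, a i * x (Fin.castLE hrm i) + b) with hf
  have hcont : Continuous f := by
    refine continuous_pi fun i => ?_
    refine Fin.lastCases ?_ (fun j => ?_) i
    · simp only [hf, Fin.snoc_last]; fun_prop
    · simp only [hf, Fin.snoc_castSucc]; fun_prop
  have hinit : Function.LeftInverse (fun y : Fin (m + 1) → ℝ => fun i : Fin m => y i.castSucc) f :=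
    fun x => by ext i; simp [hf]
  have hemb : MeasurableEmbedding f :=
    (hinit.isClosedEmbedding (by fun_prop) hcont).measurableEmbedding
  have hratio : (0 : ℝ) < (m + 1 : ℝ) / (r + 1 : ℝ) := by positivity
  have hratioE : (0 : EReal) < (((m + 1 : ℝ) / (r + 1 : ℝ) : ℝ) : EReal) := by
    exact_mod_cast hratio
  have hlow : ∀ x, max (((m + 1 : ℕ) : EReal))
      ((((m + 1 : ℝ) / (r + 1 : ℝ) : ℝ) : EReal) * sigmaV (Fin.snoc a b)) ≤ omegaT (f x) := by
    intro x
    have h1 : ((m + 1 : ℕ) : EReal) ≤ omegaT (f x) := natCast_le_omegaT (Nat.succ_pos m) _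
    refine max_le h1 ?_
    rw [mul_comm, ← EReal.le_div_iff_mul_le hratioE (EReal.coe_ne_top _)]
    refine sSup_le ?_
    rintro _ ⟨v, rfl, hinf⟩
    rw [EReal.le_div_iff_mul_le hratioE (EReal.coe_ne_top _), mul_comm, ← EReal.coe_mul]
    rcases le_or_gt v 0 with hv | hv
    · refine le_trans ?_ h1
      refine le_trans (EReal.coe_le_coe_iff.2 (mul_nonpos_of_nonneg_of_nonpos hratio.le hv)) ?_
      rw [← EReal.coe_natCast]
      exact EReal.coe_le_coe_iff.2 (Nat.cast_nonneg _)
    · exact mul_le_omegaT_snoc hrm a b hv hinf x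
  apply le_antisymm
  · rw [← EReal.le_of_forall_lt_iff_le]
    intro v hv
    obtain ⟨hv1, hv2⟩ := max_lt_iff.1 hv
    have hvm : ((m + 1 : ℕ) : ℝ) < v := by
      rw [← EReal.coe_natCast] at hv1
      exact_mod_cast hv1
    set u : ℝ := v / ((m + 1 : ℕ) : ℝ) with hu
    have hm0 : (0 : ℝ) < ((m + 1 : ℕ) : ℝ) := by positivity
    have hu1 : 1 < u := (one_lt_div hm0).2 hvm
    have hσ : sigmaV (Fin.snoc a b : Fin (r + 1) → ℝ) < (((r + 1) * u : ℝ) : EReal) := by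
      rw [mul_comm, ← EReal.lt_div_iff hratioE (EReal.coe_ne_top _), ← EReal.coe_div] at hv2
      convert hv2 using 2
      rw [hu]; push_cast; field_simp
    have hr0 : (0 : ℝ) ≤ r := Nat.cast_nonneg r
    obtain ⟨w, hw1, hw2⟩ := EReal.lt_iff_exists_real_btwn.1 (max_lt hσ
      (EReal.coe_lt_coe_iff.2 (show (0 : ℝ) < (r + 1) * u by positivity)))
    have hw0 : 0 < w := EReal.coe_lt_coe_iff.1 (lt_of_le_of_lt (le_max_right _ _) hw1)
    have hfin := finite_of_sigmaV_lt (lt_of_le_of_lt (le_max_left _ _) hw1)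
    have hae : ∀ᵐ x : Fin m → ℝ, ∀ N : ℕ, {q | x ∈ nearSet (zeroExtend m a) b N u q}.Finite :=
      ae_all_iff.2 fun N => ae_finite_nearSet hrm a ha b hu1 hw0 (Nat.cast_nonneg N)
        (EReal.coe_lt_coe_iff.1 hw2) hfin
    have hae' : ∀ᵐ x : Fin m → ℝ, omegaT (f x) ≤ v := by
      filter_upwards [hae] with x hx
      obtain ⟨N, hN⟩ := exists_nat_ge ‖x‖
      refine omegaT_le_of_finite ((hx N).subset ?_)
      rintro q ⟨p, hp⟩
      rw [dot_snoc] at hp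
      exact ⟨fun i => (norm_le_pi_norm x i).trans hN, p, hp⟩
    refine sSup_le ?_
    rintro _ ⟨v', rfl, hpos⟩
    by_contra! hlt
    refine hpos.ne' ?_
    rw [hemb.map_apply]
    refine measure_mono_null (fun x hx => ?_) (ae_iff.1 hae')
    exact not_le.2 (hlt.trans hx)
  · rw [← EReal.ge_of_forall_gt_iff_ge]
    intro v hv
    refine le_sSup ⟨v, rfl, ?_⟩
    rw [hemb.map_apply]
    have huniv : f ⁻¹' {y | (v : EReal) < omegaT y} = Set.univ :=
      Set.eq_univ_of_forall fun x => hv.trans_le (hlow x)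
    rw [huniv]
    exact Measure.measure_univ_pos.2 (NeZero.ne _)
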